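/- Let A and C be finite abelian groups of odd order and ψ : C × C → A an equalized 2-cocycle. For every coadjoint orbit Ω, the cardinality of Ω is a perfect square n², and the two-sided ideal V_Ω of ℂ[B_ψ] is isomorphic as a ℂ-algebra to the algebra of n × n complex matrices; in particular dim_ℂ V_Ω = #Ω and the irreducible representation of B_ψ corresponding to Ω has dimension n = √(#Ω). -/

import Mathlib

/-- A 2-cocycle on `C` with values in `A` (trivial action of `C` on `A`). -/
def IsCocycle {A C : Type*} [AddCommGroup A] [AddCommGroup C] (ψ : C → C → A) : Prop :=
  ∀ c₁ c₂ c₃ : C, ψ c₁ c₂ + ψ (c₁ + c₂) c₃ = ψ c₁ (c₂ + c₃) + ψ c₂ c₃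

/-- A 2-cocycle `ψ` is equalized iff `ψ(c, -c) = 0` for all `c`. -/
def Equalized {A C : Type*} [AddCommGroup A] [AddCommGroup C] (ψ : C → C → A) : Prop :=
  ∀ c : C, ψ c (-c) = 0

/-- The skew-symmetrization `η(c₁,c₂) = ψ(c₁,c₂) - ψ(c₂,c₁)` of a 2-cocycle. -/
def eta {A C : Type*} [AddCommGroup A] [AddCommGroup C] (ψ : C → C → A)
    (c₁ c₂ : C) : A :=
  ψ c₁ c₂ - ψ c₂ c₁

/-- The addition `⊞` on `A × C` given by `φ(c₁,c₂) = (ψ(c₁,c₂)+ψ(c₂,c₁))/2`,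
where `half` is the halving map of the 2-divisible group `A`. -/
def boxAdd {A C : Type*} [AddCommGroup A] [AddCommGroup C] (half : A → A)
    (ψ : C → C → A) (x y : A × C) : A × C :=
  (x.1 + y.1 + half (ψ x.2 y.2 + ψ y.2 x.2), x.2 + y.2)

/-- A character of `(A × C, ⊞)`: a map `χ : A × C → ℂˣ` with `χ(x ⊞ y) = χ(x)·χ(y)`. -/
def IsChar {A C : Type*} [AddCommGroup A] [AddCommGroup C] (half : A → A)
    (ψ : C → C → A) (χ : A × C → ℂˣ) : Prop :=
  ∀ x y : A × C, χ (boxAdd half ψ x y) = χ x * χ y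

/-- The coadjoint action of `b ∈ B_ψ` on characters: `(b • χ)(a,c) = χ(a - η(c_b,c), c)`. -/
def coact {A C : Type*} [AddCommGroup A] [AddCommGroup C] (ψ : C → C → A)
    (b : A × C) (χ : A × C → ℂˣ) : A × C → ℂˣ :=
  fun x => χ (x.1 - eta ψ b.2 x.2, x.2)

/-- A coadjoint orbit: the orbit of some character `χ₀` under the coadjoint action. -/
def IsCoadjointOrbit {A C : Type*} [AddCommGroup A] [AddCommGroup C] (half : A → A)
    (ψ : C → C → A) (Ω : Set (A × C → ℂˣ)) : Prop :=
  ∃ χ₀ : A × C → ℂˣ, IsChar half ψ χ₀ ∧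
    Ω = {χ : A × C → ℂˣ | ∃ b : A × C, χ = coact ψ b χ₀}

/-- The element `X_χ = ∑_{x ∈ A × C} χ(x)·x` of the group algebra `ℂ[B_ψ]`,
where `B_ψ` is `A × C` endowed with a group structure. -/
noncomputable def Xelem {A C : Type*} [AddCommGroup A] [AddCommGroup C]
    [Fintype A] [Fintype C] [Group (A × C)] (χ : A × C → ℂˣ) :
    MonoidAlgebra ℂ (A × C) :=
  ∑ x : A × C, MonoidAlgebra.single x (χ x : ℂ)

/-- The subspace `V_Ω = span_ℂ {X_χ : χ ∈ Ω}` of `ℂ[B_ψ]`. -/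
noncomputable def Vorb {A C : Type*} [AddCommGroup A] [AddCommGroup C]
    [Fintype A] [Fintype C] [Group (A × C)] (Ω : Set (A × C → ℂˣ)) :
    Submodule ℂ (MonoidAlgebra ℂ (A × C)) :=
  Submodule.span ℂ (Xelem '' Ω)

/-!
The coadjoint action is conjugation, `(b • χ)(x) = χ(b⁻¹xb)`, and left multiplication by `b`
permutes the `X_χ` up to scalars: `b * X_χ = χ(b)⁻¹ X_{b/2 • χ}`. Hence on `V_Ω` two elements of
`B_ψ` that move `χ ∈ Ω` to the same point act proportionally, so the image `R` of `ℂ[B_ψ]` in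
`End(V_Ω)` is spanned by one unit for each point of `Ω`. In `R` the commutation rule `b r = (χ(b) /
(r • χ)(b)) r b` makes these units joint eigenvectors for conjugation by `B_ψ`, and distinct points
of `Ω` have distinct eigenvalue systems. This stays true in every nonzero quotient of `R`, so the
units remain linearly independent there: `R` is simple of dimension `#Ω`, hence a matrix algebra by
Wedderburn's theorem. Orthogonality of characters gives `dim V_Ω = #Ω` and shows that `V_Ω → R` is
injective, hence bijective.
-/

section SeparatedUnits

variable {K R ι κ : Type*}

theorem linearIndependent_of_joint_eigenvectors {M : Type*} [CommRing K] [IsDomain K]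
    [AddCommGroup M] [Module K M] [Module.IsTorsionFree K M]
    {v : ι → M} {f : κ → Module.End K M} {μ : ι → κ → K} (hv : ∀ i, v i ≠ 0)
    (hf : ∀ k i, f k (v i) = μ i k • v i) (hμ : Function.Injective μ) :
    LinearIndependent K v := by
  classical
  rw [linearIndependent_iff']
  intro s
  induction s using Finset.induction_on with
  | empty => simp
  | insert j s hj ih =>
    intro a ha
    have hs : ∀ i ∈ s, a i = 0 := by
      intro i hi
      obtain ⟨k, hk⟩ := Function.ne_iff.1 (hμ.ne (ne_of_mem_of_not_mem hi hj))
      have hkill : ∑ i ∈ s, (a i * (μ i k - μ j k)) • v i = 0 := by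
        have := congrArg (f k - algebraMap K (Module.End K M) (μ j k)) ha
        simpa [Finset.sum_insert hj, hf, smul_smul, mul_sub, sub_smul, Finset.smul_sum,
          mul_comm (μ j k)] using this
      exact (mul_eq_zero.1 (ih _ hkill i hi)).resolve_right (sub_ne_zero.2 hk)
    have haj : a j = 0 := by
      rw [Finset.sum_insert hj, Finset.sum_eq_zero fun i hi => by rw [hs i hi, zero_smul],
        add_zero] at ha
      exact (smul_eq_zero.1 ha).resolve_right (hv j)
    exact (Finset.forall_mem_insert _ _ _).2 ⟨haj, hs⟩

variable [Field K] [Ring R] [Algebra K R] {v : ι → Rˣ} {w : κ → Rˣ} {β : ι → κ → K}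

theorem linearIndependent_of_separated_units [Nontrivial R]
    (hcomm : ∀ k i, (w k * v i : R) = β i k • (v i * w k : R)) (hβ : Function.Injective β) :
    LinearIndependent K fun i => (v i : R) := by
  refine linearIndependent_of_joint_eigenvectors
    (f := fun k => LinearMap.mulRight K (↑(w k)⁻¹ : R) ∘ₗ LinearMap.mulLeft K (w k : R))
    (fun i => (v i).ne_zero) (fun k i => ?_) hβ
  simp [hcomm]

theorem injective_algHom_of_separated_units {S : Type*} [Ring S] [Nontrivial S] [Algebra K S]
    (hspan : Submodule.span K (Set.range fun i => (v i : R)) = ⊤)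
    (hcomm : ∀ k i, (w k * v i : R) = β i k • (v i * w k : R)) (hβ : Function.Injective β)
    (f : R →ₐ[K] S) : Function.Injective f := by
  have hindep : LinearIndependent K (f.toLinearMap ∘ fun i => (v i : R)) :=
    linearIndependent_of_separated_units (v := fun i => Units.map (f : R →* S) (v i))
      (w := fun k => Units.map (f : R →* S) (w k))
      (fun k i => by simpa using congrArg f (hcomm k i)) hβ
  have hker : LinearMap.ker f.toLinearMap = ⊥ := by
    simpa [hspan] using Submodule.range_ker_disjoint hindep
  exact LinearMap.ker_eq_bot.1 hker

theorem isSimpleRing_of_separated_units [Nontrivial R]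
    (hspan : Submodule.span K (Set.range fun i => (v i : R)) = ⊤)
    (hcomm : ∀ k i, (w k * v i : R) = β i k • (v i * w k : R)) (hβ : Function.Injective β) :
    IsSimpleRing R := by
  refine .of_eq_bot_or_eq_top fun I => or_iff_not_imp_right.2 fun hI => ?_
  have : Nontrivial I.ringCon.Quotient :=
    RingCon.nontrivial_quotient.2 fun h => hI (TwoSidedIdeal.ringCon_injective h)
  have hinj := injective_algHom_of_separated_units hspan hcomm hβ (I.ringCon.mkₐ (α := K))
  exact eq_bot_iff.2 fun x hx => hinj ((RingCon.eq _).2 hx)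

theorem exists_algEquiv_matrix_of_separated_units [IsAlgClosed K] [Nontrivial R] [Finite ι]
    (hspan : Submodule.span K (Set.range fun i => (v i : R)) = ⊤)
    (hcomm : ∀ k i, (w k * v i : R) = β i k • (v i * w k : R)) (hβ : Function.Injective β) :
    ∃ n : ℕ, Nat.card ι = n ^ 2 ∧ Nonempty (R ≃ₐ[K] Matrix (Fin n) (Fin n) K) := by
  let b := Module.Basis.mk (linearIndependent_of_separated_units hcomm hβ) hspan.ge
  have : FiniteDimensional K R := b.finiteDimensional_of_finite
  have := isSimpleRing_of_separated_units hspan hcomm hβ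
  obtain ⟨n, _, ⟨f⟩⟩ := IsSimpleRing.exists_algEquiv_matrix_of_isAlgClosed K R
  refine ⟨n, ?_, ⟨f⟩⟩
  rw [← Module.finrank_eq_nat_card_basis b, f.toLinearEquiv.finrank_eq, Module.finrank_matrix]
  simp [sq]

end SeparatedUnits

theorem mul_mem_span_of_single_mul_mem {k G : Type*} [CommSemiring k] [Monoid G]
    {s : Set (MonoidAlgebra k G)}
    (hs : ∀ g, ∀ y ∈ s, MonoidAlgebra.single g 1 * y ∈ Submodule.span k s)
    (x : MonoidAlgebra k G) {y : MonoidAlgebra k G} (hy : y ∈ Submodule.span k s) :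
    x * y ∈ Submodule.span k s := by
  induction x using MonoidAlgebra.induction_on with
  | of g =>
    have : Submodule.span k s ≤
        (Submodule.span k s).comap (LinearMap.mulLeft k (MonoidAlgebra.single g 1)) :=
      Submodule.span_le.2 (hs g)
    exact this hy
  | add x x' hx hx' => rw [add_mul]; exact add_mem hx hx'
  | smul r x hx => rw [smul_mul_assoc]; exact Submodule.smul_mem _ r hx

theorem mem_annihilator_span_iff {k S : Type*} [CommSemiring k] [Semiring S] [Algebra k S]
    {s : Set S} (hs : ∀ x, ∀ y ∈ Submodule.span k s, x * y ∈ Submodule.span k s) {x : S} :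
    x ∈ Module.annihilator S (Ideal.span s) ↔ ∀ y ∈ s, x * y = 0 := by
  have hspan : ∀ y ∈ Ideal.span s, y ∈ Submodule.span k s := by
    intro y hy
    induction hy using Submodule.span_induction with
    | mem y hy => exact Submodule.subset_span hy
    | zero => exact zero_mem _
    | add y z _ _ hy hz => exact add_mem hy hz
    | smul r y _ hy => exact hs r y hy
  refine ⟨fun hx y hy => ?_, fun hx => Submodule.mem_annihilator.2 fun y hy => ?_⟩
  · exact Submodule.mem_annihilator.1 hx y (Submodule.subset_span hy)
  · have : Submodule.span k s ≤ LinearMap.ker (LinearMap.mulLeft k x) := Submodule.span_le.2 hx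
    exact this (hspan y hy)

theorem exists_half_eq_nsmul {A : Type*} [AddCommGroup A] [Finite A] {half : A → A}
    (hhalf : ∀ a, half a + half a = a) : ∃ m : ℕ, ∀ a, half a = m • a := by
  have := Fintype.ofFinite A
  have hinj : Function.Injective fun a : A => a + a :=
    Finite.injective_iff_surjective.2 fun a => ⟨half a, hhalf a⟩
  have hodd : ¬ 2 ∣ Fintype.card A := by
    intro h
    obtain ⟨a, ha⟩ := exists_prime_addOrderOf_dvd_card 2 h
    have ha0 : a + a = 0 + 0 := by rw [add_zero, ← two_nsmul, ← ha, addOrderOf_nsmul_eq_zero]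
    simp [hinj ha0] at ha
  obtain ⟨k, hk⟩ := Nat.not_even_iff_odd.1 (even_iff_two_dvd.not.2 hodd)
  refine ⟨k + 1, fun a => hinj ?_⟩
  calc half a + half a = Fintype.card A • a + a := by rw [hhalf, card_nsmul_eq_zero, zero_add]
    _ = (k + 1) • a + (k + 1) • a := by rw [hk]; module

section Cocycle

variable {A C : Type*} [AddCommGroup A] [AddCommGroup C] {ψ : C → C → A}

theorem eta_self (c : C) : eta ψ c c = 0 :=
  sub_self _

theorem neg_eta (b c : C) : -eta ψ b c = eta ψ c b :=
  neg_sub _ _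

theorem eta_add_left (hψ : IsCocycle ψ) (b c d : C) :
    eta ψ (b + c) d = eta ψ b d + eta ψ c d := by
  have h₁ := hψ b c d
  have h₂ := hψ d b c
  have h₃ := hψ b d c
  rw [add_comm d b] at h₂
  rw [add_comm d c] at h₃
  unfold eta
  grind

theorem eta_add_right (hψ : IsCocycle ψ) (b c d : C) :
    eta ψ b (c + d) = eta ψ b c + eta ψ b d := by
  rw [← neg_eta, eta_add_left hψ, neg_add, neg_eta, neg_eta]

theorem eta_nsmul_left (hψ : IsCocycle ψ) (m : ℕ) (b c : C) :
    eta ψ (m • b) c = m • eta ψ b c :=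
  map_nsmul (AddMonoidHom.mk' (eta ψ · c) fun b d => eta_add_left hψ b d c) m b

theorem coact_coact (hψ : IsCocycle ψ) (b d : A × C) (χ : A × C → ℂˣ) :
    coact ψ b (coact ψ d χ) = coact ψ (b + d) χ := by
  funext x
  simp only [coact, Prod.snd_add, eta_add_left hψ, sub_sub]

theorem coact_eq_conj [Group (A × C)]
    (hmul : ∀ x y : A × C, x * y = (x.1 + y.1 + ψ x.2 y.2, x.2 + y.2))
    (b : A × C) (χ : A × C → ℂˣ) (x : A × C) : coact ψ b χ x = χ (b⁻¹ * x * b) := by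
  have hconj : x * b = b * (x.1 - eta ψ b.2 x.2, x.2) := by
    rw [hmul, hmul]
    ext
    · simp only [eta]; abel
    · exact add_comm _ _
  rw [mul_assoc, hconj, inv_mul_cancel_left, coact]

end Cocycle

section Characters

variable {A C : Type*} [AddCommGroup A] [AddCommGroup C] {half : A → A} {ψ : C → C → A}
  {χ χ' : A × C → ℂˣ}

namespace IsChar

/-- The central character of a character `χ` of `(A × C, ⊞)`: the character of `A` by which the
translations `(a, c) ↦ (a' + a, c)` act on `χ`. The denominator is there because `(0, 0)` need not
be neutral for `⊞`. -/
def central (hχ : IsChar half ψ χ) : AddChar A ℂˣ where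
  toFun a := χ (a, 0) / χ (0, 0)
  map_zero_eq_one' := div_self' _
  map_add_eq_mul' a a' := by
    have h : boxAdd half ψ (a, 0) (a', 0) = boxAdd half ψ (0, 0) (a + a', 0) := by simp [boxAdd]
    rw [div_mul_div_comm, ← hχ, h, hχ, mul_div_mul_left_eq_div]

theorem apply_add (hχ : IsChar half ψ χ) (a a' : A) (c : C) :
    χ (a + a', c) = hχ.central a * χ (a', c) := by
  have h : boxAdd half ψ (a, 0) (a', c) = boxAdd half ψ (0, 0) (a + a', c) := by simp [boxAdd]
  change _ = χ (a, 0) / χ (0, 0) * _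
  rw [div_mul_eq_mul_div, ← hχ, h, hχ, mul_div_cancel_left]

theorem coact_apply (hχ : IsChar half ψ χ) (b x : A × C) :
    coact ψ b χ x = (hχ.central (eta ψ b.2 x.2))⁻¹ * χ x := by
  rw [← AddChar.map_neg_eq_inv, ← hχ.apply_add, neg_add_eq_sub, coact]

theorem coact_eq_coact_iff (hχ : IsChar half ψ χ) {b b' : A × C} :
    coact ψ b χ = coact ψ b' χ ↔
      ∀ c, hχ.central (eta ψ b.2 c) = hχ.central (eta ψ b'.2 c) := by
  refine ⟨fun h c => ?_, fun h => funext fun x => by rw [hχ.coact_apply, h, ← hχ.coact_apply]⟩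
  simpa [hχ.coact_apply] using congrFun h (0, c)

theorem coact (hψ : IsCocycle ψ) (hχ : IsChar half ψ χ) (b : A × C) :
    IsChar half ψ (coact ψ b χ) := by
  intro x y
  simp only [_root_.coact, ← hχ _ _]
  congr 1
  ext
  · simp only [boxAdd, eta_add_right hψ]; abel
  · rfl

theorem div (hχ : IsChar half ψ χ) (hχ' : IsChar half ψ χ') : IsChar half ψ (χ / χ') :=
  fun x y => by simp only [Pi.div_apply, hχ x y, hχ' x y, mul_div_mul_comm]

theorem sum_eq_zero [Fintype A] [Fintype C] (hχ : IsChar half ψ χ) (hne : χ ≠ 1) :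
    ∑ x, (χ x : ℂ) = 0 := by
  obtain ⟨y, hy⟩ := Function.ne_iff.1 hne
  have hbij : Function.Bijective (boxAdd half ψ y) := by
    refine Finite.injective_iff_bijective.1 fun x x' h => ?_
    simp only [boxAdd, Prod.mk.injEq, add_right_inj] at h
    exact Prod.ext (by simpa [h.2] using h.1) h.2
  have hinv : (χ y : ℂ) * ∑ x, (χ x : ℂ) = ∑ x, (χ x : ℂ) := by
    calc (χ y : ℂ) * ∑ x, (χ x : ℂ) = ∑ x, (χ (boxAdd half ψ y x) : ℂ) := by
          simp only [hχ y, Units.val_mul, Finset.mul_sum]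
      _ = ∑ x, (χ x : ℂ) := hbij.sum_comp fun x => (χ x : ℂ)
  by_contra hsum
  exact hy (Units.ext ((mul_eq_right₀ hsum).1 hinv))

section Group

variable [Group (A × C)] {m : ℕ}
  (hm : ∀ a, half a = m • a) (hhalf : ∀ a, half a + half a = a)
  (hmul : ∀ x y : A × C, x * y = (x.1 + y.1 + ψ x.2 y.2, x.2 + y.2))

include hm hhalf hmul

theorem map_mul (hχ : IsChar half ψ χ) (x y : A × C) :
    χ (x * y) = hχ.central (half (eta ψ x.2 y.2)) * (χ x * χ y) := by
  have hψ_eq : half (eta ψ x.2 y.2) + half (ψ x.2 y.2 + ψ y.2 x.2) = ψ x.2 y.2 := by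
    calc _ = half (ψ x.2 y.2) + half (ψ x.2 y.2) := by simp only [hm, eta]; module
      _ = ψ x.2 y.2 := hhalf _
  rw [← hχ, boxAdd, ← hχ.apply_add, hmul, add_left_comm, hψ_eq]

theorem map_mul_of_commute (hχ : IsChar half ψ χ) {x y : A × C} (hxy : Commute x y) :
    χ (x * y) = χ x * χ y := by
  have heta : eta ψ x.2 y.2 = 0 := by
    have := congrArg Prod.fst hxy.eq
    rw [hmul, hmul, add_comm y.1] at this
    exact sub_eq_zero.2 (add_left_cancel this)
  rw [hχ.map_mul hm hhalf hmul, heta, hm, smul_zero, AddChar.map_zero_eq_one, one_mul]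

theorem map_inv (hχ : IsChar half ψ χ) (x : A × C) : χ x⁻¹ = (χ x)⁻¹ := by
  have hone : χ 1 = 1 := by
    simpa using hχ.map_mul_of_commute hm hhalf hmul (Commute.one_left 1)
  rw [eq_inv_iff_mul_eq_one, ← hχ.map_mul_of_commute hm hhalf hmul (Commute.refl x).inv_left,
    inv_mul_cancel, hone]

end Group

end IsChar

end Characters

section GroupAlgebra

variable {A C : Type*} [AddCommGroup A] [AddCommGroup C] [Fintype A] [Fintype C] [Group (A × C)]
  {half : A → A} {ψ : C → C → A} {χ : A × C → ℂˣ} {m : ℕ}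

theorem coeff_Xelem (χ : A × C → ℂˣ) (x : A × C) : (Xelem χ).coeff x = χ x := by
  classical
  simp [Xelem, Finsupp.single_apply]

section

variable (hm : ∀ a, half a = m • a) (hhalf : ∀ a, half a + half a = a)
  (hmul : ∀ x y : A × C, x * y = (x.1 + y.1 + ψ x.2 y.2, x.2 + y.2))

include hm hhalf hmul

theorem single_mul_Xelem (hψ : IsCocycle ψ) (hχ : IsChar half ψ χ) (b : A × C) :
    MonoidAlgebra.single b 1 * Xelem χ = ((χ b)⁻¹ : ℂˣ) • Xelem (coact ψ (m • b) χ) := by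
  have hcoact : ∀ x, (χ b)⁻¹ * coact ψ (m • b) χ (b * x) = χ x := by
    intro x
    have heta : eta ψ (m • b).2 (b * x).2 = half (eta ψ b.2 x.2) := by
      rw [hmul, Prod.smul_snd, eta_nsmul_left hψ, eta_add_right hψ, eta_self, zero_add, hm]
    rw [hχ.coact_apply, heta, hχ.map_mul hm hhalf hmul, inv_mul_cancel_left, inv_mul_cancel_left]
  ext y
  obtain ⟨x, rfl⟩ := (Equiv.mulLeft b).surjective y
  simp [coeff_Xelem, Units.smul_def, ← hcoact x]

theorem coeff_one_Xelem_mul_Xelem [DecidableEq (A × C → ℂˣ)] {χ' : A × C → ℂˣ}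
    (hχ : IsChar half ψ χ) (hχ' : IsChar half ψ χ') :
    (Xelem χ * Xelem χ').coeff 1 = if χ = χ' then (Fintype.card (A × C) : ℂ) else 0 := by
  have hsum : (Xelem χ * Xelem χ').coeff 1 = ∑ x, ((χ / χ') x : ℂ) := by
    conv_lhs => rw [Xelem, Finset.sum_mul]
    simp [coeff_Xelem, hχ'.map_inv hm hhalf hmul, div_eq_mul_inv]
  split_ifs with h
  · rw [hsum, h]; simp
  · rw [hsum, (hχ.div hχ').sum_eq_zero (div_ne_one.2 h)]

theorem eq_zero_of_sum_smul_Xelem_mul_eq_zero {ι : Type*} [Fintype ι] {θ : ι → A × C → ℂˣ}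
    (hθ : ∀ i, IsChar half ψ (θ i)) (hinj : Function.Injective θ) {a : ι → ℂ} {j : ι}
    (h : (∑ i, a i • Xelem (θ i)) * Xelem (θ j) = 0) : a j = 0 := by
  classical
  have hcoeff := congrArg (fun x => x.coeff 1) h
  simpa [Finset.sum_mul, coeff_one_Xelem_mul_Xelem hm hhalf hmul (hθ _) (hθ _), hinj.eq_iff]
    using hcoeff

end

end GroupAlgebra

section Orbit

variable {A C : Type*} [AddCommGroup A] [AddCommGroup C] {half : A → A} {ψ : C → C → A}
  {χ χ' : A × C → ℂˣ}

/-- The coadjoint orbit of `χ`, given by the same formula as in `IsCoadjointOrbit`, so that the two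
agree definitionally. -/
def coadjointOrbit (ψ : C → C → A) (χ : A × C → ℂˣ) : Set (A × C → ℂˣ) :=
  {χ' | ∃ b : A × C, χ' = coact ψ b χ}

theorem coact_mem_coadjointOrbit (b : A × C) : coact ψ b χ ∈ coadjointOrbit ψ χ :=
  ⟨b, rfl⟩

instance finite_coadjointOrbit [Finite A] [Finite C] : Finite (coadjointOrbit ψ χ) :=
  Set.Finite.to_subtype <| (Set.finite_range fun b => coact ψ b χ).subset <| by
    rintro _ ⟨b, rfl⟩
    exact ⟨b, rfl⟩

theorem IsChar.of_mem_coadjointOrbit (hψ : IsCocycle ψ) (hχ : IsChar half ψ χ)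
    (hχ' : χ' ∈ coadjointOrbit ψ χ) : IsChar half ψ χ' := by
  obtain ⟨b, rfl⟩ := hχ'
  exact hχ.coact hψ b

variable [Fintype A] [Fintype C] [Group (A × C)] {m : ℕ}
  (hm : ∀ a, half a = m • a) (hhalf : ∀ a, half a + half a = a) (hψ : IsCocycle ψ)
  (hmul : ∀ x y : A × C, x * y = (x.1 + y.1 + ψ x.2 y.2, x.2 + y.2)) (hχ : IsChar half ψ χ)

include hm hhalf hψ hmul hχ

theorem mul_mem_Vorb (x : MonoidAlgebra ℂ (A × C)) {y : MonoidAlgebra ℂ (A × C)}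
    (hy : y ∈ Vorb (coadjointOrbit ψ χ)) : x * y ∈ Vorb (coadjointOrbit ψ χ) := by
  refine mul_mem_span_of_single_mul_mem ?_ x hy
  rintro b _ ⟨_, ⟨d, rfl⟩, rfl⟩
  rw [single_mul_Xelem hm hhalf hmul hψ (hχ.coact hψ d), coact_coact hψ]
  exact Submodule.smul_of_tower_mem _ _ <|
    Submodule.subset_span ⟨_, coact_mem_coadjointOrbit _, rfl⟩

theorem finrank_Vorb :
    Module.finrank ℂ (Vorb (coadjointOrbit ψ χ)) = Nat.card (coadjointOrbit ψ χ) := by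
  have := Fintype.ofFinite (coadjointOrbit ψ χ)
  have hindep : LinearIndependent ℂ fun i : coadjointOrbit ψ χ => Xelem i.1 :=
    Fintype.linearIndependent_iff.2 fun a ha j =>
      eq_zero_of_sum_smul_Xelem_mul_eq_zero hm hhalf hmul
        (fun i => hχ.of_mem_coadjointOrbit hψ i.2) Subtype.val_injective (j := j) (by
          rw [ha, zero_mul])
  rw [Vorb, Set.image_eq_range, finrank_span_eq_card hindep, Nat.card_eq_fintype_card]

theorem eq_zero_of_mem_Vorb_of_mul_Xelem_eq_zero {x : MonoidAlgebra ℂ (A × C)}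
    (hx : x ∈ Vorb (coadjointOrbit ψ χ)) (h : ∀ χ' ∈ coadjointOrbit ψ χ, x * Xelem χ' = 0) :
    x = 0 := by
  have := Fintype.ofFinite (coadjointOrbit ψ χ)
  rw [Vorb, Set.image_eq_range] at hx
  obtain ⟨a, rfl⟩ := (Submodule.mem_span_range_iff_exists_fun ℂ).1 hx
  refine Finset.sum_eq_zero fun j _ => ?_
  rw [eq_zero_of_sum_smul_Xelem_mul_eq_zero hm hhalf hmul
    (fun i : coadjointOrbit ψ χ => hχ.of_mem_coadjointOrbit hψ i.2) Subtype.val_injective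
    (h j j.2), zero_smul]

theorem single_mul_Xelem_of_coact_eq {b b' : A × C} (hb : coact ψ b χ = coact ψ b' χ)
    (hχ' : χ' ∈ coadjointOrbit ψ χ) :
    MonoidAlgebra.single b 1 * Xelem χ' =
      (χ b' / χ b) • (MonoidAlgebra.single b' 1 * Xelem χ') := by
  obtain ⟨d, rfl⟩ := hχ'
  have hcentral := hχ.coact_eq_coact_iff.1 hb
  have hscalar : (coact ψ d χ b)⁻¹ = χ b' / χ b * (coact ψ d χ b')⁻¹ := by
    rw [hχ.coact_apply, hχ.coact_apply, ← neg_eta b.2, ← neg_eta b'.2, AddChar.map_neg_eq_inv,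
      AddChar.map_neg_eq_inv, hcentral, inv_inv, mul_inv, mul_inv, mul_left_comm,
      div_mul_eq_mul_div, mul_inv_cancel, one_div]
  have hhalf_coact : coact ψ (m • b) (coact ψ d χ) = coact ψ (m • b') (coact ψ d χ) := by
    rw [coact_coact hψ, coact_coact hψ, hχ.coact_eq_coact_iff]
    simp [eta_add_left hψ, eta_nsmul_left hψ, AddChar.map_add_eq_mul, AddChar.map_nsmul_eq_pow,
      hcentral]
  rw [single_mul_Xelem hm hhalf hmul hψ (hχ.coact hψ d),
    single_mul_Xelem hm hhalf hmul hψ (hχ.coact hψ d), hhalf_coact, hscalar, mul_smul]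

end Orbit

section OrbitAlgebra

variable {A C : Type*} [AddCommGroup A] [AddCommGroup C] [Fintype A] [Fintype C] [Group (A × C)]
  {half : A → A} {ψ : C → C → A} {χ : A × C → ℂˣ} {m : ℕ}

/-- The image of `ℂ[B_ψ]` in the endomorphisms of the left ideal generated by the `X_χ` with
`χ ∈ Ω`, encoded as the quotient of `ℂ[B_ψ]` by the annihilator of this ideal. It is a unital model
of `V_Ω`. -/
abbrev OrbitAlgebra (Ω : Set (A × C → ℂˣ)) : Type _ :=
  MonoidAlgebra ℂ (A × C) ⧸
    Module.annihilator (MonoidAlgebra ℂ (A × C)) (Ideal.span (Xelem '' Ω))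

namespace OrbitAlgebra

/-- The quotient map from `ℂ[B_ψ]` onto `OrbitAlgebra Ω`, as an algebra homomorphism. -/
noncomputable def mk (Ω : Set (A × C → ℂˣ)) :
    MonoidAlgebra ℂ (A × C) →ₐ[ℂ] OrbitAlgebra Ω :=
  Ideal.Quotient.mkₐ ℂ _

/-- The image of the group `B_ψ` in the unit group of `OrbitAlgebra Ω`. -/
noncomputable def unit (Ω : Set (A × C → ℂˣ)) : A × C →* (OrbitAlgebra Ω)ˣ :=
  MonoidHom.toHomUnits ((mk Ω : _ →* OrbitAlgebra Ω).comp (MonoidAlgebra.of ℂ (A × C)))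

variable (hm : ∀ a, half a = m • a) (hhalf : ∀ a, half a + half a = a) (hψ : IsCocycle ψ)
  (hmul : ∀ x y : A × C, x * y = (x.1 + y.1 + ψ x.2 y.2, x.2 + y.2)) (hχ : IsChar half ψ χ)

include hm hhalf hψ hmul hχ

theorem mk_eq_mk_iff {x y : MonoidAlgebra ℂ (A × C)} :
    mk (coadjointOrbit ψ χ) x = mk (coadjointOrbit ψ χ) y ↔
      ∀ χ' ∈ coadjointOrbit ψ χ, x * Xelem χ' = y * Xelem χ' := by
  refine Ideal.Quotient.eq.trans <|
    (mem_annihilator_span_iff fun z _ => mul_mem_Vorb hm hhalf hψ hmul hχ z).trans ?_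
  simp only [Set.forall_mem_image, sub_mul, sub_eq_zero]

theorem unit_eq_smul_unit {b b' : A × C} (hb : coact ψ b χ = coact ψ b' χ) :
    (unit (coadjointOrbit ψ χ) b : OrbitAlgebra (coadjointOrbit ψ χ)) =
      (χ b' / χ b) • (unit (coadjointOrbit ψ χ) b' : OrbitAlgebra (coadjointOrbit ψ χ)) := by
  have hmk := (mk_eq_mk_iff hm hhalf hψ hmul hχ (x := MonoidAlgebra.single b 1)
    (y := (χ b' / χ b) • MonoidAlgebra.single b' 1)).2 fun χ' hχ' => by
      rw [single_mul_Xelem_of_coact_eq hm hhalf hψ hmul hχ hb hχ', smul_mul_assoc]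
  exact hmk

theorem span_range_unit_eq_top {r : coadjointOrbit ψ χ → A × C}
    (hr : ∀ i, coact ψ (r i) χ = i) :
    Submodule.span ℂ (Set.range fun i =>
      (unit (coadjointOrbit ψ χ) (r i) : OrbitAlgebra (coadjointOrbit ψ χ))) = ⊤ := by
  refine eq_top_iff.2 fun y _ => ?_
  obtain ⟨x, rfl⟩ := Ideal.Quotient.mkₐ_surjective ℂ _ y
  induction x using MonoidAlgebra.induction_on with
  | of b =>
    have hb := unit_eq_smul_unit hm hhalf hψ hmul hχ (hr ⟨_, coact_mem_coadjointOrbit b⟩).symm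
    change (unit (coadjointOrbit ψ χ) b : OrbitAlgebra (coadjointOrbit ψ χ)) ∈ _
    rw [hb]
    exact Submodule.smul_of_tower_mem _ _ (Submodule.subset_span ⟨_, rfl⟩)
  | add x x' hx hx' => rw [map_add]; exact add_mem (hx trivial) (hx' trivial)
  | smul a x hx => rw [map_smul]; exact Submodule.smul_mem _ a (hx trivial)

theorem unit_mul_unit (b r : A × C) :
    (unit (coadjointOrbit ψ χ) b * unit (coadjointOrbit ψ χ) r :
        OrbitAlgebra (coadjointOrbit ψ χ)) =
      (χ b / coact ψ r χ b) •
        (unit (coadjointOrbit ψ χ) r * unit (coadjointOrbit ψ χ) b :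
          OrbitAlgebra (coadjointOrbit ψ χ)) := by
  have hconj : r * (r⁻¹ * b * r) = b * r := by group
  have hsnd_mul : ∀ x y : A × C, (x * y).2 = x.2 + y.2 := fun x y => by rw [hmul]
  have hsnd : (r⁻¹ * b * r).2 = b.2 :=
    add_left_cancel (a := r.2) (by rw [← hsnd_mul, hconj, hsnd_mul, add_comm])
  have hcoact : coact ψ (r⁻¹ * b * r) χ = coact ψ b χ := by unfold coact; rw [hsnd]
  rw [← Units.val_mul, ← map_mul, ← hconj, map_mul, Units.val_mul,
    unit_eq_smul_unit hm hhalf hψ hmul hχ hcoact, coact_eq_conj hmul, mul_smul_comm]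

theorem injective_domRestrict_mk :
    Function.Injective
      ((mk (coadjointOrbit ψ χ)).toLinearMap.domRestrict (Vorb (coadjointOrbit ψ χ))) := by
  refine (injective_iff_map_eq_zero _).2 fun x hx => Subtype.ext ?_
  refine eq_zero_of_mem_Vorb_of_mul_Xelem_eq_zero hm hhalf hψ hmul hχ x.2 fun χ' hχ' => ?_
  simpa using (mk_eq_mk_iff hm hhalf hψ hmul hχ).1 (hx.trans (map_zero (mk _)).symm) χ' hχ'

theorem exists_algEquiv_matrix :
    ∃ n : ℕ, Nat.card (coadjointOrbit ψ χ) = n ^ 2 ∧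
      Nonempty (OrbitAlgebra (coadjointOrbit ψ χ) ≃ₐ[ℂ] Matrix (Fin n) (Fin n) ℂ) := by
  choose r hr using fun i : coadjointOrbit ψ χ => i.2
  have : Nonempty (coadjointOrbit ψ χ) := ⟨⟨_, coact_mem_coadjointOrbit 1⟩⟩
  have : Nontrivial (Vorb (coadjointOrbit ψ χ)) :=
    Module.nontrivial_of_finrank_pos (R := ℂ) <| by
      rw [finrank_Vorb hm hhalf hψ hmul hχ]; exact Nat.card_pos
  have : Nontrivial (OrbitAlgebra (coadjointOrbit ψ χ)) :=
    (injective_domRestrict_mk hm hhalf hψ hmul hχ).nontrivial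
  refine exists_algEquiv_matrix_of_separated_units
    (w := unit (coadjointOrbit ψ χ)) (β := fun i b => ((χ b / i.1 b : ℂˣ) : ℂ))
    (span_range_unit_eq_top hm hhalf hψ hmul hχ fun i => (hr i).symm) (fun b i => ?_) ?_
  · conv_rhs => rw [hr i]
    exact unit_mul_unit hm hhalf hψ hmul hχ b (r i)
  · intro i j hij
    exact Subtype.ext <| funext fun b => div_right_injective (Units.ext (congrFun hij b))

end OrbitAlgebra

end OrbitAlgebra

theorem dimension_formula_general {A C : Type*} [AddCommGroup A] [AddCommGroup C]
    [Fintype A] [Fintype C] [Group (A × C)]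
    (half : A → A) (hhalf : ∀ a : A, half a + half a = a)
    (ψ : C → C → A) (hψ : IsCocycle ψ)
    (hmul : ∀ x y : A × C, x * y = (x.1 + y.1 + ψ x.2 y.2, x.2 + y.2))
    (Ω : Set (A × C → ℂˣ)) (hΩ : IsCoadjointOrbit half ψ Ω) :
    ∃ n : ℕ, Nat.card Ω = n ^ 2 ∧
      Module.finrank ℂ (Vorb Ω) = Nat.card Ω ∧
      ∃ e : (Vorb Ω) ≃ₗ[ℂ] Matrix (Fin n) (Fin n) ℂ,
        ∀ (x y : MonoidAlgebra ℂ (A × C)) (hx : x ∈ Vorb Ω) (hy : y ∈ Vorb Ω)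
          (hxy : x * y ∈ Vorb Ω),
          e ⟨x * y, hxy⟩ = e ⟨x, hx⟩ * e ⟨y, hy⟩ := by
  obtain ⟨m, hm⟩ := exists_half_eq_nsmul hhalf
  obtain ⟨χ, hχ, hΩχ⟩ := hΩ
  obtain rfl : Ω = coadjointOrbit ψ χ := hΩχ
  obtain ⟨n, hcard, ⟨f⟩⟩ := OrbitAlgebra.exists_algEquiv_matrix hm hhalf hψ hmul hχ
  have hfinrank := finrank_Vorb hm hhalf hψ hmul hχ
  have : FiniteDimensional ℂ (OrbitAlgebra (coadjointOrbit ψ χ)) :=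
    f.symm.toLinearEquiv.finiteDimensional
  have hdim : Module.finrank ℂ (Vorb (coadjointOrbit ψ χ)) =
      Module.finrank ℂ (OrbitAlgebra (coadjointOrbit ψ χ)) := by
    rw [hfinrank, hcard, f.toLinearEquiv.finrank_eq, Module.finrank_matrix]
    simp [sq]
  let g := LinearMap.linearEquivOfInjective _
    (OrbitAlgebra.injective_domRestrict_mk hm hhalf hψ hmul hχ) hdim
  refine ⟨n, hcard, hfinrank, g.trans f.toLinearEquiv, fun x y _ _ _ => ?_⟩
  exact (congrArg f (map_mul (OrbitAlgebra.mk _) x y)).trans (map_mul f _ _)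

/-- **Dimension formula.** Let `A` and `C` be finite abelian groups of odd
order and `ψ` an equalized 2-cocycle, with `B_ψ` the group `A × C` with multiplication
`(a₁,c₁)·(a₂,c₂) = (a₁+a₂+ψ(c₁,c₂), c₁+c₂)`. For every coadjoint orbit `Ω`, the
cardinality of `Ω` is a perfect square `n²`, the two-sided ideal `V_Ω` of `ℂ[B_ψ]` has
dimension `#Ω`, and `V_Ω` is isomorphic as a ℂ-algebra to the algebra of `n × n` complex
matrices (a multiplicative ℂ-linear equivalence); in particular the irreducible
representation corresponding to `Ω` has dimension `n = √(#Ω)`. -/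
theorem dimension_formula {A C : Type*} [AddCommGroup A] [AddCommGroup C]
    [Fintype A] [Fintype C] [Group (A × C)]
    (hA : Odd (Fintype.card A)) (hC : Odd (Fintype.card C))
    (half : A → A) (hhalf : ∀ a : A, half a + half a = a)
    (ψ : C → C → A) (hψ : IsCocycle ψ) (heq : Equalized ψ)
    (hmul : ∀ x y : A × C, x * y = (x.1 + y.1 + ψ x.2 y.2, x.2 + y.2))
    (Ω : Set (A × C → ℂˣ)) (hΩ : IsCoadjointOrbit half ψ Ω) :
    ∃ n : ℕ, Nat.card Ω = n ^ 2 ∧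
      Module.finrank ℂ (Vorb Ω) = Nat.card Ω ∧
      ∃ e : (Vorb Ω) ≃ₗ[ℂ] Matrix (Fin n) (Fin n) ℂ,
        ∀ (x y : MonoidAlgebra ℂ (A × C)) (hx : x ∈ Vorb Ω) (hy : y ∈ Vorb Ω)
          (hxy : x * y ∈ Vorb Ω),
          e ⟨x * y, hxy⟩ = e ⟨x, hx⟩ * e ⟨y, hy⟩ :=
  dimension_formula_general half hhalf ψ hψ hmul Ω hΩ
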